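/- arXiv:0903.3835 — 6 statements merged into one kernel-verified Lean document; each statement's English description precedes it below -/
import Mathlib

section
/- Let R be a commutative Noetherian ring, G a linearly ordered abelian group, and v : R → G ∪ {+∞} a valuation (i.e. v(g₁g₂) = v(g₁) + v(g₂), v(g₁+g₂) ≥ min(v(g₁), v(g₂)), v(1) = 0) such that v(g) ≥ 0 for every g ∈ R. Then the set of values S = { v(g) : g ∈ R, v(g) ≠ +∞ } is well-ordered: every nonempty subset of S has a least element. -/
/-- Let `R` be a commutative Noetherian ring, `G` a linearly ordered abelian
group, and `v : R → G ∪ {+∞}` a valuation (i.e. `v (g₁ * g₂) = v g₁ + v g₂`,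
`v (g₁ + g₂) ≥ min (v g₁) (v g₂)`, `v 1 = 0`, `v 0 = +∞`) such that `v g ≥ 0` for every
`g ∈ R`.  Then the set of values `S = {v g : g ∈ R, v g ≠ +∞}` is well-ordered: every
nonempty subset of `S` has a least element. -/
theorem poincare_stmt0 {R : Type*} [CommRing R] [IsNoetherianRing R]
    {G : Type*} [AddCommGroup G] [LinearOrder G] [IsOrderedAddMonoid G]
    (v : R → WithTop G)
    (hmul : ∀ g₁ g₂ : R, v (g₁ * g₂) = v g₁ + v g₂)
    (hadd : ∀ g₁ g₂ : R, min (v g₁) (v g₂) ≤ v (g₁ + g₂))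
    (hone : v 1 = 0)
    (hzero : v 0 = ⊤)
    (hnonneg : ∀ g : R, 0 ≤ v g)
    (S : Set G)
    (hS : S = {a : G | ∃ g : R, v g = (a : WithTop G)}) :
    ∀ T : Set G, T ⊆ S → T.Nonempty → ∃ m ∈ T, ∀ a ∈ T, m ≤ a := by
  subst hS
  intro T hTS hT
  let I : G → Ideal R := fun a =>
    { carrier := {g | (a : WithTop G) ≤ v g}
      add_mem' := fun hx hy => (le_min hx hy).trans (hadd _ _)
      zero_mem' := by simp [hzero]
      smul_mem' := fun c x hx => by
        change (a : WithTop G) ≤ v (c * x)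
        rw [hmul]
        exact le_add_of_nonneg_of_le (hnonneg c) hx }
  obtain ⟨m, hmT, hm⟩ := (InvImage.wf I (wellFounded_gt (α := Ideal R))).has_min T hT
  refine ⟨m, hmT, fun a haT => le_of_not_gt fun ham => hm a haT ?_⟩
  obtain ⟨g, hg⟩ := hTS haT
  refine SetLike.lt_iff_le_and_exists.2
    ⟨fun x hx => (WithTop.coe_le_coe.2 ham.le).trans hx, g, hg.ge, fun hgm => ?_⟩
  exact ham.not_ge (WithTop.coe_le_coe.1 (hg ▸ hgm : (m : WithTop G) ≤ a))
end

section
/- Let R be a commutative Noetherian ring, G a linearly ordered abelian group, and v : R → G ∪ {+∞} a valuation with v(g) ≥ 0 for every g ∈ R, and let S = { v(g) : g ∈ R, v(g) ≠ +∞ } be its semigroup of values. Then every element a ∈ S has only finitely many representations a = a₁ + a₂ as a sum of two elements a₁, a₂ ∈ S. -/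
/-- The values of a valuation that is nonnegative on a Noetherian ring form a well-ordered set:
`a ↦ {g | a ≤ v g}` is a strictly decreasing map from the values to the ideals. -/
theorem isWF_values_of_isNoetherianRing {R : Type*} [CommRing R] [IsNoetherianRing R]
    {G : Type*} [AddCommGroup G] [LinearOrder G] [IsOrderedAddMonoid G]
    (v : R → WithTop G)
    (hmul : ∀ g₁ g₂ : R, v (g₁ * g₂) = v g₁ + v g₂)
    (hadd : ∀ g₁ g₂ : R, min (v g₁) (v g₂) ≤ v (g₁ + g₂))
    (hzero : v 0 = ⊤)
    (hnonneg : ∀ g : R, 0 ≤ v g) :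
    {a : G | ∃ g : R, v g = (a : WithTop G)}.IsWF := by
  let I : G → Ideal R := fun a =>
    { carrier := {g | (a : WithTop G) ≤ v g}
      zero_mem' := by simp [hzero]
      add_mem' := fun {x y} hx hy => (le_min hx hy).trans (hadd x y)
      smul_mem' := fun c x hx => by
        simp only [Set.mem_ofPred_eq, smul_eq_mul, hmul] at hx ⊢
        exact hx.trans (le_add_of_nonneg_left (hnonneg c)) }
  refine Subrelation.wf ?_
    (InvImage.wf (fun a : {a : G | ∃ g : R, v g = (a : WithTop G)} => I a)
      (wellFounded_gt (α := Ideal R)))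
  rintro ⟨a, g, hg⟩ ⟨b, _⟩ (hab : a < b)
  have hab' : (a : WithTop G) < b := WithTop.coe_lt_coe.2 hab
  refine SetLike.lt_iff_le_and_exists.2
    ⟨fun x (hx : (b : WithTop G) ≤ v x) => hab'.le.trans hx, g, hg.ge, fun hgb => ?_⟩
  exact (hab'.trans_le hgb).ne' hg

/-- Let `R` be a commutative Noetherian ring, `G` a linearly ordered abelian
group, and `v : R → G ∪ {+∞}` a valuation with `v g ≥ 0` for every `g ∈ R`, and let
`S = {v g : g ∈ R, v g ≠ +∞}` be its semigroup of values.  Then every element `a ∈ S` has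
only finitely many representations `a = a₁ + a₂` as a sum of two elements `a₁, a₂ ∈ S`. -/
theorem poincare_stmt1 {R : Type*} [CommRing R] [IsNoetherianRing R]
    {G : Type*} [AddCommGroup G] [LinearOrder G] [IsOrderedAddMonoid G]
    (v : R → WithTop G)
    (hmul : ∀ g₁ g₂ : R, v (g₁ * g₂) = v g₁ + v g₂)
    (hadd : ∀ g₁ g₂ : R, min (v g₁) (v g₂) ≤ v (g₁ + g₂))
    (hone : v 1 = 0)
    (hzero : v 0 = ⊤)
    (hnonneg : ∀ g : R, 0 ≤ v g)
    (S : Set G)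
    (hS : S = {a : G | ∃ g : R, v g = (a : WithTop G)}) :
    ∀ a ∈ S, {p : G × G | p.1 ∈ S ∧ p.2 ∈ S ∧ p.1 + p.2 = a}.Finite := by
  intro a _
  have hpwo : S.IsPWO :=
    (hS ▸ isWF_values_of_isNoetherianRing v hmul hadd hzero hnonneg : S.IsWF).isPWO
  exact Set.AddAntidiagonal.finite_of_isPWO hpwo hpwo a
end

section
/- For any formal power series φ₁, φ₂ ∈ ℂ[[τ]] with zero constant term, the kernel of the substitution homomorphism ℂ[[x,y]] → ℂ[[τ]], g(x,y) ↦ g(φ₁(τ), φ₂(τ)), is a nonzero prime ideal of ℂ[[x,y]]. In particular, the curve valuation g ↦ ord_τ(g(φ₁,φ₂)) always has a nontrivial kernel: there exists g ≠ 0 with g(φ₁,φ₂) = 0. -/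
/-- The substitution `g(x,y) ↦ g(φ₁(τ), φ₂(τ))` of two one-variable power series with zero
constant term into a two-variable power series. -/
noncomputable def substPS (φ₁ φ₂ : PowerSeries ℂ) (g : MvPowerSeries (Fin 2) ℂ) :
    PowerSeries ℂ :=
  PowerSeries.mk fun d =>
    ∑ p ∈ Finset.range (d + 1) ×ˢ Finset.range (d + 1),
      MvPowerSeries.coeff (Finsupp.single 0 p.1 + Finsupp.single 1 p.2) g *
        PowerSeries.coeff d (φ₁ ^ p.1 * φ₂ ^ p.2)

/-- A ring homomorphism is finite as soon as finitely many elements generate its codomain. -/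
theorem RingHom.Finite.of_sum_mul {A B ι : Type*} [CommRing A] [CommRing B] (f : A →+* B)
    (t : Finset ι) (v : ι → B) (h : ∀ b, ∃ c : ι → A, b = ∑ i ∈ t, v i * f (c i)) :
    f.Finite := by
  classical
  let := f.toAlgebra
  refine ⟨⟨t.image v, ?_⟩⟩
  rw [eq_top_iff]
  intro b _
  obtain ⟨c, rfl⟩ := h b
  refine Submodule.sum_mem _ fun i hi => ?_
  rw [mul_comm]
  exact Submodule.smul_mem _ (c i) (Submodule.subset_span (Finset.mem_image_of_mem _ hi))

namespace PowerSeries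

/-- Over a field, `k⟦X⟧` is finite over `k⟦φ⟧` when `φ` is nonzero without constant term. -/
theorem substAlgHom_finite {k : Type*} [Field k] {φ : PowerSeries k} (hφ : HasSubst φ)
    (h₀ : constantCoeff φ = 0) (hne : φ ≠ 0) :
    (substAlgHom (R := k) hφ).toRingHom.Finite := by
  set s : PowerSeries k →ₐ[k] PowerSeries k := substAlgHom (R := k) hφ with hs
  have hsX : s X = φ := substAlgHom_X hφ
  have hsC (c : k) : s (C c) = C c := s.commutes c
  obtain ⟨u, hu⟩ := isUnit_divided_by_X_pow_order hne
  set n := φ.order.toNat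
  have hX : (X : PowerSeries k) ^ n = φ * ↑u⁻¹ := by
    rw [← X_pow_order_mul_divXPowOrder (f := φ), ← hu, mul_assoc, Units.mul_inv, mul_one]
  let D (f : PowerSeries k) : PowerSeries k := mk (fun i => coeff (i + n) f) * ↑u⁻¹
  have hD (f : PowerSeries k) :
      f = ∑ i ∈ Finset.range n, X ^ i * C (coeff i f) + φ * D f := by
    conv_lhs => rw [eq_shift_mul_X_pow_add_trunc n f, hX]
    rw [add_comm]
    congr 1
    · ext j
      simp [coeff_trunc, Polynomial.coeff_coe]
    · simp only [D]; ring
  let a (f : PowerSeries k) (i : ℕ) : PowerSeries k := mk fun j => coeff i (D^[j] f)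
  have ha (f : PowerSeries k) (i : ℕ) : a f i = C (coeff i f) + X * a (D f) i := by
    rw [eq_X_mul_shift_add_const (a f i), add_comm]
    simp [a]
  let F (f : PowerSeries k) : PowerSeries k := ∑ i ∈ Finset.range n, X ^ i * s (a f i)
  have hF (f : PowerSeries k) : f - F f = φ * (D f - F (D f)) := by
    have : F f = ∑ i ∈ Finset.range n, X ^ i * C (coeff i f) + φ * F (D f) := by
      simp only [F, Finset.mul_sum, ← Finset.sum_add_distrib]
      refine Finset.sum_congr rfl fun i _ => ?_
      rw [ha, map_add, map_mul, hsX, hsC]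
      ring
    conv_lhs => rw [this]; enter [1]; rw [hD f]
    ring
  have hdvd (m : ℕ) : ∀ f, X ^ m ∣ f - F f := by
    induction m with
    | zero => simp
    | succ m ih =>
      intro f
      rw [hF, pow_succ']
      exact mul_dvd_mul (X_dvd_iff.mpr h₀) (ih _)
  have hfix (f : PowerSeries k) : f = F f := by
    rw [← sub_eq_zero]
    ext m
    exact X_pow_dvd_iff.mp (hdvd (m + 1) f) m m.lt_succ_self
  exact .of_sum_mul _ (Finset.range n) (fun i => X ^ i) fun f => ⟨a f, hfix f⟩

end PowerSeries

namespace MvPowerSeries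

theorem hasSubst_pair {R : Type*} [CommRing R] {φ₁ φ₂ : PowerSeries R}
    (h₁ : PowerSeries.constantCoeff φ₁ = 0) (h₂ : PowerSeries.constantCoeff φ₂ = 0) :
    HasSubst (S := R) (τ := Unit) ![φ₁, φ₂] :=
  hasSubst_of_constantCoeff_zero <| Fin.forall_fin_two.mpr ⟨h₁, h₂⟩

/-- Substituting a pair into a polynomial in `X 1` with coefficients in `R⟦X 0⟧`. -/
theorem substAlgHom_pair_eval₂ {R : Type*} [CommRing R] {φ₁ φ₂ : PowerSeries R}
    (h₁ : PowerSeries.constantCoeff φ₁ = 0) (h₂ : PowerSeries.constantCoeff φ₂ = 0)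
    (p : Polynomial (PowerSeries R)) :
    substAlgHom (R := R) (hasSubst_pair h₁ h₂)
        (p.eval₂ (PowerSeries.substAlgHom (R := R)
          (PowerSeries.HasSubst.X (S := R) (0 : Fin 2))).toRingHom (X 1)) =
      p.eval₂ (PowerSeries.substAlgHom (R := R)
        (PowerSeries.HasSubst.of_constantCoeff_zero' h₁)).toRingHom φ₂ := by
  have hs := hasSubst_pair h₁ h₂
  rw [← AlgHom.coe_toRingHom, Polynomial.hom_eval₂]
  congr 1
  · ext1 f
    simp only [RingHom.comp_apply, AlgHom.toRingHom_eq_coe, RingHom.coe_coe,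
      PowerSeries.coe_substAlgHom, coe_substAlgHom]
    rw [PowerSeries.subst, subst_comp_subst_apply (PowerSeries.HasSubst.X (0 : Fin 2)).const hs]
    simp only [subst_X hs]
    rfl
  · exact substAlgHom_X hs 1

theorem exists_ne_zero_substAlgHom_eq_zero {k : Type*} [Field k] {φ₁ φ₂ : PowerSeries k}
    (h₁ : PowerSeries.constantCoeff φ₁ = 0) (h₂ : PowerSeries.constantCoeff φ₂ = 0) :
    ∃ g : MvPowerSeries (Fin 2) k, g ≠ 0 ∧
      substAlgHom (R := k) (hasSubst_pair h₁ h₂) g = 0 := by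
  by_cases hne : φ₁ = 0
  · refine ⟨X 0, fun h => ?_, (substAlgHom_X _ 0).trans hne⟩
    simpa [coeff_X] using congrArg (coeff (Finsupp.single 0 1)) h
  obtain ⟨p, hp, hroot⟩ := (PowerSeries.substAlgHom_finite
    (PowerSeries.HasSubst.of_constantCoeff_zero' h₁) h₁ hne).to_isIntegral φ₂
  refine ⟨_, fun hzero => ?_, (substAlgHom_pair_eval₂ h₁ h₂ p).trans hroot⟩
  have h := substAlgHom_pair_eval₂ (R := k) (φ₁ := 0) (map_zero _)
    PowerSeries.constantCoeff_X p
  rw [hzero, map_zero] at h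
  have hcoe : p.eval₂ (PowerSeries.substAlgHom (R := k)
      (PowerSeries.HasSubst.of_constantCoeff_zero' (map_zero _))).toRingHom PowerSeries.X =
      ((p.map PowerSeries.constantCoeff : Polynomial k) : PowerSeries k) := by
    rw [← Polynomial.eval₂_C_X_eq_coe, Polynomial.eval₂_map]
    congr 1
    ext1 f
    simp only [AlgHom.toRingHom_eq_coe, RingHom.coe_coe, PowerSeries.coe_substAlgHom]
    exact PowerSeries.subst_zero_eq_C_constantCoeff
  rw [hcoe, eq_comm, Polynomial.coe_eq_zero_iff] at h
  exact (hp.map _).ne_zero h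

end MvPowerSeries

theorem substPS_eq_substAlgHom {φ₁ φ₂ : PowerSeries ℂ}
    (h₁ : PowerSeries.constantCoeff φ₁ = 0) (h₂ : PowerSeries.constantCoeff φ₂ = 0)
    (g : MvPowerSeries (Fin 2) ℂ) :
    substPS φ₁ φ₂ g =
      MvPowerSeries.substAlgHom (R := ℂ) (MvPowerSeries.hasSubst_pair h₁ h₂) g := by
  have hs := MvPowerSeries.hasSubst_pair h₁ h₂
  let e : ℕ × ℕ → (Fin 2 →₀ ℕ) := fun p => Finsupp.single 0 p.1 + Finsupp.single 1 p.2
  have he0 (p : ℕ × ℕ) : e p 0 = p.1 := by simp [e]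
  have he1 (p : ℕ × ℕ) : e p 1 = p.2 := by simp [e]
  have heta (q : Fin 2 →₀ ℕ) : e (q 0, q 1) = q := by
    ext i; fin_cases i
    · exact he0 _
    · exact he1 _
  have hinj : Function.Injective e := fun p q h =>
    Prod.ext (by rw [← he0, h, he0]) (by rw [← he1, h, he1])
  have hprod (q : Fin 2 →₀ ℕ) :
      (q.prod fun s i => (![φ₁, φ₂] : Fin 2 → PowerSeries ℂ) s ^ i) = φ₁ ^ q 0 * φ₂ ^ q 1 := by
    rw [Finsupp.prod_fintype _ _ (by simp)]
    simp [Fin.prod_univ_two]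
  have hzero (d : ℕ) (i j : ℕ) (hij : d < i ∨ d < j) :
      PowerSeries.coeff d (φ₁ ^ i * φ₂ ^ j) = 0 := by
    have hdvd : (PowerSeries.X : PowerSeries ℂ) ^ (i + j) ∣ φ₁ ^ i * φ₂ ^ j := by
      rw [pow_add]
      exact mul_dvd_mul (pow_dvd_pow_of_dvd (PowerSeries.X_dvd_iff.mpr h₁) i)
        (pow_dvd_pow_of_dvd (PowerSeries.X_dvd_iff.mpr h₂) j)
    exact PowerSeries.X_pow_dvd_iff.mp hdvd d (by omega)
  ext d
  rw [MvPowerSeries.coe_substAlgHom, substPS, PowerSeries.coeff_mk]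
  refine Eq.trans ?_ (MvPowerSeries.coeff_subst hs g (Finsupp.single () d)).symm
  rw [finsum_eq_sum_of_support_subset (s := (Finset.range (d + 1) ×ˢ Finset.range (d + 1)).map
    ⟨e, hinj⟩), Finset.sum_map]
  · refine Finset.sum_congr rfl fun p _ => ?_
    change _ = MvPowerSeries.coeff (e p) g • PowerSeries.coeff d
      ((e p).prod fun s i => (![φ₁, φ₂] : Fin 2 → PowerSeries ℂ) s ^ i)
    rw [hprod, he0, he1, smul_eq_mul]
  · intro q hq
    by_contra hmem
    refine hq ?_
    change MvPowerSeries.coeff q g • PowerSeries.coeff d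
      (q.prod fun s i => (![φ₁, φ₂] : Fin 2 → PowerSeries ℂ) s ^ i) = 0
    rw [hprod, hzero, smul_zero]
    by_contra! hle
    refine hmem (Finset.mem_coe.mpr (Finset.mem_map.mpr ⟨(q 0, q 1), ?_, heta q⟩))
    simp only [Finset.mem_product, Finset.mem_range]
    omega

/-- For any `φ₁, φ₂ ∈ ℂ[[τ]]` with zero constant term, the kernel of the
substitution homomorphism `ℂ[[x,y]] → ℂ[[τ]]`, `g ↦ g(φ₁, φ₂)`, is a nonzero prime ideal
of `ℂ[[x,y]]`.  In particular there exists `g ≠ 0` with `g(φ₁, φ₂) = 0`. -/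
theorem poincare_stmt3 (φ₁ φ₂ : PowerSeries ℂ)
    (h₁ : PowerSeries.constantCoeff φ₁ = 0)
    (h₂ : PowerSeries.constantCoeff φ₂ = 0) :
    (∃ I : Ideal (MvPowerSeries (Fin 2) ℂ),
      (I : Set (MvPowerSeries (Fin 2) ℂ)) = {g | substPS φ₁ φ₂ g = 0} ∧
      I ≠ ⊥ ∧ I.IsPrime) ∧
    ∃ g : MvPowerSeries (Fin 2) ℂ, g ≠ 0 ∧ substPS φ₁ φ₂ g = 0 := by
  obtain ⟨g, hg, hg0⟩ := MvPowerSeries.exists_ne_zero_substAlgHom_eq_zero h₁ h₂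
  simp only [substPS_eq_substAlgHom h₁ h₂]
  let s : MvPowerSeries (Fin 2) ℂ →ₐ[ℂ] PowerSeries ℂ :=
    MvPowerSeries.substAlgHom (MvPowerSeries.hasSubst_pair h₁ h₂)
  refine ⟨⟨RingHom.ker s, rfl, fun hbot => hg ?_, RingHom.ker_isPrime s⟩, g, hg, hg0⟩
  exact (Submodule.mem_bot _).mp (hbot ▸ (show g ∈ RingHom.ker s from hg0))
end

section
/- Let f ∈ ℂ[[x,y]] be an irreducible formal power series with zero constant term. Then there exist φ₁, φ₂ ∈ ℂ[[τ]] with zero constant term, not both zero, such that f(φ₁(τ), φ₂(τ)) = 0 and, moreover, the kernel of the substitution homomorphism ℂ[[x,y]] → ℂ[[τ]], g ↦ g(φ₁,φ₂), is exactly the principal ideal (f) generated by f. (Existence of a parametrization/uniformization of the irreducible curve germ {f = 0}.) -/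
open scoped Polynomial PowerSeries

/-- A distinguished polynomial over an adically complete ring that divides a polynomial as a power
series divides it as a polynomial. -/
theorem Polynomial.IsDistinguishedAt.dvd_of_coe_dvd {A : Type*} [CommRing A] [Nontrivial A]
    {I : Ideal A} [IsAdicComplete I A] (hI : I ≠ ⊤) {W P : A[X]} (hW : W.IsDistinguishedAt I)
    (h : (W : A⟦X⟧) ∣ P) : W ∣ P := by
  obtain ⟨u, hu⟩ := h
  have hdeg : W.natDegree = ((W : A⟦X⟧).map (Ideal.Quotient.mk I)).order.toNat := by
    have := hW.coe_natDegree_eq_order_map (W : A⟦X⟧) 1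
      (by rwa [PowerSeries.constantCoeff_one, ← Ideal.ne_top_iff_one]) (by simp)
    rw [← this, ENat.toNat_natCast]
  rw [← Polynomial.modByMonic_eq_zero_iff_dvd hW.monic]
  refine (hW.isWeierstrassDivisorAt'.eq_zero_of_mul_eq (q := u - (P /ₘ W : A[X]))
    (r := P %ₘ W) ?_ ?_).2
  · rw [← hdeg, ← Polynomial.degree_eq_natDegree hW.monic.ne_zero]
    exact Polynomial.degree_modByMonic_lt P hW.monic
  · have hP := congrArg (fun Q : A[X] ↦ (Q : A⟦X⟧)) (Polynomial.modByMonic_add_div P W)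
    simp only [Polynomial.coe_add, Polynomial.coe_mul] at hP
    linear_combination -hu - hP

namespace PowerSeries

variable {K : Type*} [Field K]

instance isAdicComplete_maximalIdeal :
    IsAdicComplete (IsLocalRing.maximalIdeal K⟦X⟧) K⟦X⟧ := by
  rw [maximalIdeal_eq_span_X]
  infer_instance

theorem mem_maximalIdeal_iff_constantCoeff (a : K⟦X⟧) :
    a ∈ IsLocalRing.maximalIdeal K⟦X⟧ ↔ constantCoeff a = 0 := by
  rw [maximalIdeal_eq_span_X, Ideal.mem_span_singleton, X_dvd_iff]

/-- Weierstrass preparation at a root `c` of the reduction of `Q`: if the reduction is not a pure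
power, a factor of smaller positive degree splits off after translation by `c`. -/
theorem exists_monic_dvd_taylor [IsAlgClosed K] [CharZero K] {Q : K⟦X⟧[X]} (hQ : Q.Monic)
    (hn : 0 < Q.natDegree) (hnext : constantCoeff (Q.coeff (Q.natDegree - 1)) = 0)
    (hne : ∃ i < Q.natDegree, constantCoeff (Q.coeff i) ≠ 0) :
    ∃ (c : K) (W : K⟦X⟧[X]), W.Monic ∧ 0 < W.natDegree ∧ W.natDegree < Q.natDegree ∧
      W ∣ Polynomial.taylor (C c) Q := by
  set Qb : K[X] := Q.map constantCoeff with hQb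
  have hQbm : Qb.Monic := hQ.map _
  have hQbn : Qb.natDegree = Q.natDegree := hQ.natDegree_map _
  obtain ⟨c, hc⟩ := IsAlgClosed.exists_root Qb
    (by rw [Polynomial.degree_eq_natDegree hQbm.ne_zero, hQbn]; exact_mod_cast hn.ne')
  set T := Polynomial.taylor (C c) Q with hT
  have hTn : T.natDegree = Q.natDegree := Polynomial.natDegree_taylor _ _
  have hTm : T.Monic := by
    rw [hT, Polynomial.taylor_apply]
    exact hQ.comp_X_add_C _
  have hTmap : T.map constantCoeff = Polynomial.taylor c Qb := by
    rw [hT, Polynomial.map_taylor, constantCoeff_C]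
  have hT0 : constantCoeff (T.coeff 0) = 0 := by
    rw [← Polynomial.coeff_map, hTmap, Polynomial.taylor_coeff_zero]
    exact hc
  have hTne : ∃ i < Q.natDegree, constantCoeff (T.coeff i) ≠ 0 := by
    by_contra! hall
    have hpow : Polynomial.taylor c Qb = Polynomial.X ^ Q.natDegree := by
      rw [← hTmap]
      ext i
      rw [Polynomial.coeff_map, Polynomial.coeff_X_pow]
      rcases lt_trichotomy i Q.natDegree with h | h | h
      · rw [hall i h, if_neg h.ne]
      · rw [if_pos h, h, ← hTn, hTm.coeff_natDegree, map_one]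
      · rw [if_neg h.ne', Polynomial.coeff_eq_zero_of_natDegree_lt (by omega), map_zero]
    have hQpow : Qb = (Polynomial.X + Polynomial.C (-c)) ^ Q.natDegree := by
      have := congrArg (Polynomial.taylor (-c)) hpow
      rw [Polynomial.taylor_taylor, neg_add_cancel, Polynomial.taylor_zero] at this
      rw [this, Polynomial.taylor_apply, Polynomial.X_pow_comp]
    have hc0 : c = 0 := by
      rw [← Polynomial.coeff_map, ← hQb, hQpow, Polynomial.coeff_X_add_C_pow,
        Nat.sub_sub_self hn, pow_one, Nat.choose_symm hn, Nat.choose_one_right] at hnext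
      simpa [hn.ne'] using hnext
    obtain ⟨i, hi, hne⟩ := hne
    apply hne
    rw [← Polynomial.coeff_map, ← hQb, hQpow, hc0, neg_zero, Polynomial.C_0, add_zero,
      Polynomial.coeff_X_pow, if_neg hi.ne]
  obtain ⟨i, hi, hTi⟩ := hTne
  have hres : (T : K⟦X⟧⟦X⟧).map (IsLocalRing.residue K⟦X⟧) ≠ 0 := by
    intro h0
    have := congrArg (coeff i) h0
    rw [coeff_map, Polynomial.coeff_coe, map_zero, IsLocalRing.residue_eq_zero_iff,
      mem_maximalIdeal_iff_constantCoeff] at this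
    exact hTi this
  obtain ⟨W, u, hW⟩ := exists_isWeierstrassFactorization hres
  have hWd : W.IsDistinguishedAt (IsLocalRing.maximalIdeal K⟦X⟧) := hW.isDistinguishedAt
  have hdvd : W ∣ T := hWd.dvd_of_coe_dvd (IsLocalRing.maximalIdeal.isMaximal _).ne_top
    ⟨u, hW.eq_mul⟩
  refine ⟨c, W, hWd.monic, ?_, ?_, hdvd⟩
  · by_contra! h0
    have hW1 : W = 1 := hWd.monic.natDegree_eq_zero.mp (by omega)
    have hu := hW.eq_mul
    rw [hW1, Polynomial.coe_one, one_mul] at hu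
    have hunit : IsUnit (constantCoeff (constantCoeff (T : K⟦X⟧⟦X⟧))) := by
      rw [hu]
      exact (hW.isUnit.map _).map _
    rw [← coeff_zero_eq_constantCoeff_apply (T : K⟦X⟧⟦X⟧), Polynomial.coeff_coe, hT0] at hunit
    exact not_isUnit_zero hunit
  · by_contra! hle
    have hTW : T = W :=
      Polynomial.eq_of_monic_of_dvd_of_natDegree_le hWd.monic hTm hdvd (by omega)
    exact hTi ((mem_maximalIdeal_iff_constantCoeff _).mp
      (hTW ▸ hWd.mem (by rw [← hTW, hTn]; exact hi)))

/-- The first side of the Newton polygon: after a ramified base change and a rescaling of the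
roots, some lower coefficient of the polynomial becomes a unit. -/
theorem exists_scaleRoots_eq_map_expand {P : K⟦X⟧[X]} (hP : P.Monic)
    (hn : 0 < P.natDegree) (hnext : P.coeff (P.natDegree - 1) = 0)
    (hne : ∃ i < P.natDegree, P.coeff i ≠ 0) :
    ∃ (q : ℕ) (hq : q ≠ 0) (p : ℕ) (Q : K⟦X⟧[X]), Q.Monic ∧ Q.natDegree = P.natDegree ∧
      Q.coeff (P.natDegree - 1) = 0 ∧ (∃ i < P.natDegree, constantCoeff (Q.coeff i) ≠ 0) ∧
      Q.scaleRoots (X ^ p) = P.map (expand (R := K) q hq : K⟦X⟧ →+* K⟦X⟧) := by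
  classical
  set n := P.natDegree with hn_def
  let slope : ℕ → ℚ := fun i ↦ ((P.coeff i).order.toNat : ℚ) / ((n - i : ℕ) : ℚ)
  obtain ⟨k, hk, hmin⟩ := Finset.exists_min_image
    ((Finset.range n).filter fun i ↦ P.coeff i ≠ 0) slope
    (by obtain ⟨i, hi, h⟩ := hne; exact ⟨i, by simp [hi, h]⟩)
  simp only [Finset.mem_filter, Finset.mem_range] at hk hmin
  obtain ⟨hkn, hk0⟩ := hk
  set q := n - k with hq_def
  have hq : q ≠ 0 := by omega
  set p := (P.coeff k).order.toNat with hp_def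
  have hdvd : ∀ i, ((X : K⟦X⟧) ^ p) ^ (n - i) ∣ expand q hq (P.coeff i) := by
    intro i
    rcases le_or_gt n i with hi | hi
    · simp [Nat.sub_eq_zero_of_le hi]
    by_cases h0 : P.coeff i = 0
    · simp [h0]
    have hle : p * (n - i) ≤ (P.coeff i).order.toNat * q := by
      have h := hmin i ⟨hi, h0⟩
      have hi' : (0 : ℚ) < ((n - i : ℕ) : ℚ) := by exact_mod_cast (by omega : 0 < n - i)
      have hk' : (0 : ℚ) < ((n - k : ℕ) : ℚ) := by exact_mod_cast (by omega : 0 < n - k)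
      rw [div_le_div_iff₀ hk' hi'] at h
      exact_mod_cast h
    have hX : expand q hq ((X : K⟦X⟧) ^ (P.coeff i).order.toNat) ∣ expand q hq (P.coeff i) :=
      map_dvd _ X_pow_order_dvd
    rw [map_pow, expand_X, ← pow_mul] at hX
    rw [← pow_mul]
    exact (pow_dvd_pow _ (by rwa [mul_comm q])).trans hX
  choose b hb using hdvd
  have hbn : b n = 1 := by
    have := hb n
    rwa [hn_def, hP.coeff_natDegree, map_one, ← hn_def, Nat.sub_self, pow_zero, one_mul,
      eq_comm] at this
  let Q : K⟦X⟧[X] := ∑ i ∈ Finset.range (n + 1), Polynomial.monomial i (b i)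
  have hQc : ∀ i, Q.coeff i = if i ≤ n then b i else 0 := by
    intro i
    simp [Q, Polynomial.finsetSum_coeff, Polynomial.coeff_monomial]
  have hQle : Q.natDegree ≤ n := by
    rw [Polynomial.natDegree_le_iff_coeff_eq_zero]
    intro i hi
    rw [hQc, if_neg (by omega)]
  have hQn1 : Q.coeff n = 1 := by rw [hQc, if_pos le_rfl, hbn]
  have hQn : Q.natDegree = n :=
    le_antisymm hQle (Polynomial.le_natDegree_of_ne_zero (by rw [hQn1]; exact one_ne_zero))
  refine ⟨q, hq, p, Q, by rw [Polynomial.Monic, Polynomial.leadingCoeff, hQn, hQn1], hQn, ?_,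
    ⟨k, hkn, ?_⟩, ?_⟩
  · have := hb (n - 1)
    rw [hnext, map_zero, eq_comm, mul_eq_zero] at this
    rw [hQc, if_pos (by omega)]
    exact this.resolve_left (pow_ne_zero _ (pow_ne_zero _ X_ne_zero))
  · rw [hQc, if_pos hkn.le]
    have h := congrArg (coeff (q * p)) (hb k)
    rw [coeff_expand_mul, ← pow_mul, ← hq_def, mul_comm q p, coeff_X_pow_mul', if_pos le_rfl,
      Nat.sub_self, coeff_zero_eq_constantCoeff_apply] at h
    rw [← h]
    exact coeff_order hk0
  · ext1 i
    rw [Polynomial.coeff_scaleRoots, hQn, hQc, Polynomial.coeff_map, RingHom.coe_coe, hb i]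
    split_ifs with hi
    · ring
    · have := hb i
      rw [Polynomial.coeff_eq_zero_of_natDegree_lt (by omega), map_zero] at this
      rw [← this, zero_mul]

/-- **Newton–Puiseux theorem**: over an algebraically closed field of characteristic zero, a monic
polynomial with power series coefficients acquires a root after a ramified base change. -/
theorem exists_eval₂_expand_eq_zero [IsAlgClosed K] [CharZero K] {P : K⟦X⟧[X]} (hP : P.Monic)
    (hn : 0 < P.natDegree) :
    ∃ (N : ℕ) (hN : N ≠ 0) (ψ : K⟦X⟧), P.eval₂ (expand (R := K) N hN : K⟦X⟧ →+* K⟦X⟧) ψ = 0 := by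
  induction hd : P.natDegree using Nat.strong_induction_on generalizing P with
  | _ n ih =>
  subst hd
  set n := P.natDegree with hn_def
  set s : K⟦X⟧ := C ((n : K)⁻¹) * P.coeff (n - 1) with hs
  set T := Polynomial.taylor (-s) P with hT
  have hTn : T.natDegree = n := Polynomial.natDegree_taylor _ _
  have hTm : T.Monic := by
    rw [hT, Polynomial.taylor_apply]
    exact hP.comp_X_add_C _
  have hTnext : T.coeff (n - 1) = 0 := by
    have hlt : (Polynomial.hasseDeriv (n - 1) P).natDegree < 2 :=
      (Polynomial.natDegree_hasseDeriv_le P (n - 1)).trans_lt (by omega)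
    have h1 : 1 + (n - 1) = n := by omega
    have hnK : C ((n : K)⁻¹) * (n : K⟦X⟧) = 1 := by
      rw [← map_natCast (C : K →+* K⟦X⟧), ← map_mul, inv_mul_cancel₀ (by exact_mod_cast hn.ne'),
        map_one]
    rw [hT, Polynomial.taylor_coeff, Polynomial.eval_eq_sum_range' hlt, Finset.sum_range_succ,
      Finset.sum_range_one, Polynomial.hasseDeriv_coeff, Polynomial.hasseDeriv_coeff, h1,
      hP.coeff_natDegree, Nat.choose_symm hn, zero_add, Nat.choose_self, Nat.choose_one_right, hs]
    linear_combination -P.coeff (n - 1) * hnK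
  suffices ∃ (N : ℕ) (hN : N ≠ 0) (ψ : K⟦X⟧), T.eval₂ (expand (R := K) N hN : K⟦X⟧ →+* K⟦X⟧) ψ = 0 by
    obtain ⟨N, hN, ψ, h⟩ := this
    rw [hT, Polynomial.taylor_apply, Polynomial.eval₂_comp] at h
    exact ⟨N, hN, _, h⟩
  by_cases hne : ∃ i < n, T.coeff i ≠ 0
  · obtain ⟨q, hq, p, Q, hQm, hQn, hQnext, hQne, hQs⟩ :=
      exists_scaleRoots_eq_map_expand hTm (by omega) (by rwa [hTn]) (by rwa [hTn])
    obtain ⟨c, W, hWm, hW0, hWn, hWQ⟩ := exists_monic_dvd_taylor hQm (by omega)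
      (by rw [hQn, hQnext, map_zero]) (by rwa [hQn])
    obtain ⟨N, hN, ψ, h⟩ := ih W.natDegree (by omega) hWm hW0 rfl
    have h' := Polynomial.eval₂_eq_zero_of_dvd_of_eval₂_eq_zero _ _ hWQ h
    rw [Polynomial.taylor_apply, Polynomial.eval₂_comp] at h'
    have h'' := Polynomial.scaleRoots_eval₂_eq_zero (s := X ^ p) _ h'
    rw [hQs, Polynomial.eval₂_map] at h''
    refine ⟨N * q, mul_ne_zero hN hq, expand N hN (X ^ p) * (Polynomial.X +
      Polynomial.C (C c)).eval₂ (expand (R := K) N hN : K⟦X⟧ →+* K⟦X⟧) ψ, ?_⟩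
    rw [expand_mul_eq_comp]
    exact h''
  · push Not at hne
    refine ⟨1, one_ne_zero, 0, ?_⟩
    rw [Polynomial.eval₂_at_zero, hne 0 hn, map_zero]

end PowerSeries

/-- The kernel of evaluation at an integral element over an integrally closed domain is generated
by a polynomial. -/
theorem Polynomial.exists_eval₂_eq_zero_iff_dvd {R S : Type*} [CommRing R] [IsDomain R]
    [IsIntegrallyClosed R] [CommRing S] [IsDomain S] (f : R →+* S) (hf : Function.Injective f)
    {s : S} (hs : f.IsIntegralElem s) :
    ∃ M : R[X], ∀ p : R[X], p.eval₂ f s = 0 ↔ M ∣ p := by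
  let := f.toAlgebra
  have : Module.IsTorsionFree R S := Module.isTorsionFree_iff_algebraMap_injective.mpr hf
  exact ⟨minpoly R s, minpoly.isIntegrallyClosed_dvd_iff hs⟩

namespace MvPowerSeries

variable {R : Type*} [CommRing R]

/-- The identification of `R⟦x, y⟧` with `R⟦y⟧⟦x⟧`. -/
noncomputable def finTwoEquivPowerSeries : MvPowerSeries (Fin 2) R ≃+* R⟦X⟧⟦X⟧ :=
  ((renameEquiv R ((_root_.finSuccEquiv 1).trans
    (Equiv.optionCongr (Equiv.ofUnique (Fin 1) Unit)))).trans (optionEquivLeft Unit R)).toRingEquiv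

theorem finTwoEquivPowerSeries_X_zero :
    finTwoEquivPowerSeries (X 0 : MvPowerSeries (Fin 2) R) = PowerSeries.X := by
  change optionEquivLeft Unit R (rename _ (X 0)) = _
  rw [rename_X]
  exact optionEquivLeft_X_none

theorem finTwoEquivPowerSeries_toMvPowerSeries_one (a : R⟦X⟧) :
    finTwoEquivPowerSeries (a.toMvPowerSeries (1 : Fin 2)) = PowerSeries.C a := by
  change optionEquivLeft Unit R (rename _ (a.toMvPowerSeries 1)) = _
  rw [rename_toMvPowerSeries]
  ext n m
  rw [PowerSeries.coeff_C, PowerSeries.coeff, coeff_coeff_optionEquivLeft]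
  have hx : (Finsupp.single () m).optionElim 0 =
      Finsupp.embDomain Function.Embedding.some (Finsupp.single () m) := by
    ext (_ | _) <;> simp [Finsupp.embDomain_eq_mapDomain]
  split_ifs with hn
  · rw [hn, hx]
    exact coeff_embDomain_rename Function.Embedding.some a _
  · refine (coeff_rename_eq_zero _ _ ?_).trans (map_zero _).symm
    rintro ⟨y, hy⟩
    have := DFunLike.congr_fun hy none
    rw [Finsupp.mapDomain_of_notMem_range _ _ (by simp)] at this
    exact hn (by simpa using this.symm)

theorem subst_finTwoEquivPowerSeries_symm_coe {φ₁ φ₂ : R⟦X⟧} (h : HasSubst ![φ₁, φ₂])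
    {f : R⟦X⟧ →+* R⟦X⟧} (hf : ∀ a, f a = a.subst φ₂) (p : R⟦X⟧[X]) :
    subst ![φ₁, φ₂] (finTwoEquivPowerSeries.symm (p : R⟦X⟧⟦X⟧)) = p.eval₂ f φ₁ := by
  suffices (((substAlgHom (R := R) h : MvPowerSeries (Fin 2) R →+* R⟦X⟧).comp
      ((finTwoEquivPowerSeries (R := R)).symm : R⟦X⟧⟦X⟧ →+* MvPowerSeries (Fin 2) R)).comp
        Polynomial.coeToPowerSeries.ringHom) = Polynomial.eval₂RingHom f φ₁ by
    simpa [substAlgHom_apply] using DFunLike.congr_fun this p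
  refine Polynomial.ringHom_ext (fun a ↦ ?_) ?_
  · simp only [RingHom.comp_apply, Polynomial.coeToPowerSeries.ringHom_apply, Polynomial.coe_C,
      Polynomial.coe_eval₂RingHom, Polynomial.eval₂_C, hf, RingHom.coe_coe,
      ← finTwoEquivPowerSeries_toMvPowerSeries_one, RingEquiv.symm_apply_apply, substAlgHom_apply]
    exact PowerSeries.subst_toMvPowerSeries h
  · simp only [RingHom.comp_apply, Polynomial.coeToPowerSeries.ringHom_apply, Polynomial.coe_X,
      Polynomial.coe_eval₂RingHom, Polynomial.eval₂_X, RingHom.coe_coe,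
      ← finTwoEquivPowerSeries_X_zero, RingEquiv.symm_apply_apply, substAlgHom_apply, subst_X h]
    rfl

end MvPowerSeries

namespace MvPowerSeries

variable {K : Type*} [Field K] {f : MvPowerSeries (Fin 2) K}

theorem associated_X_one_of_map_residue_eq_zero (hf : Irreducible f)
    (hres : (finTwoEquivPowerSeries f).map (IsLocalRing.residue K⟦X⟧) = 0) :
    Associated f (X 1) := by
  have hdvd : ∀ n, (PowerSeries.X : K⟦X⟧) ∣ PowerSeries.coeff n (finTwoEquivPowerSeries f) := by
    intro n
    have := congrArg (PowerSeries.coeff n) hres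
    rwa [PowerSeries.coeff_map, map_zero, IsLocalRing.residue_eq_zero_iff,
      PowerSeries.mem_maximalIdeal_iff_constantCoeff, ← PowerSeries.X_dvd_iff] at this
  choose b hb using hdvd
  have hfb : finTwoEquivPowerSeries f = PowerSeries.C PowerSeries.X * PowerSeries.mk b := by
    ext1 n
    rw [PowerSeries.coeff_C_mul, PowerSeries.coeff_mk, hb]
  have hX : X 1 ∣ f := by
    rw [← map_dvd_iff (finTwoEquivPowerSeries (R := K)), ← PowerSeries.toMvPowerSeries_X,
      finTwoEquivPowerSeries_toMvPowerSeries_one]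
    exact ⟨_, hfb⟩
  have hXu : ¬IsUnit (X 1 : MvPowerSeries (Fin 2) K) := by
    intro h
    simpa using h.map (constantCoeff (σ := Fin 2) (R := K))
  exact (hf.dvd_iff.mp hX).resolve_left hXu

/-- An irreducible power series that is regular in the variable `X 0` is parametrized by a Puiseux
series: it generates the kernel of a substitution `X 0 ↦ ψ`, `X 1 ↦ X ^ N`. -/
theorem exists_subst_eq_zero_iff_dvd [IsAlgClosed K] [CharZero K] (hf : Irreducible f)
    (hres : (finTwoEquivPowerSeries f).map (IsLocalRing.residue K⟦X⟧) ≠ 0) :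
    ∃ (N : ℕ) (_ : N ≠ 0) (ψ : K⟦X⟧), PowerSeries.constantCoeff ψ = 0 ∧
      ∀ g : MvPowerSeries (Fin 2) K,
        subst ![ψ, (PowerSeries.X ^ N : K⟦X⟧)] g = 0 ↔ f ∣ g := by
  obtain ⟨W, u, hW⟩ := PowerSeries.exists_isWeierstrassFactorization hres
  have hWd : W.IsDistinguishedAt (IsLocalRing.maximalIdeal K⟦X⟧) := hW.isDistinguishedAt
  have hfirr : Irreducible (finTwoEquivPowerSeries f) :=
    (MulEquiv.irreducible_iff (finTwoEquivPowerSeries (R := K))).mpr hf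
  have hW0 : 0 < W.natDegree := by
    by_contra! h0
    have hW1 : W = 1 := hWd.monic.natDegree_eq_zero.mp (by omega)
    apply hfirr.not_isUnit
    rw [hW.eq_mul, hW1, Polynomial.coe_one, one_mul]
    exact hW.isUnit
  obtain ⟨N, hN, ψ, hψ⟩ := PowerSeries.exists_eval₂_expand_eq_zero hWd.monic hW0
  set e : K⟦X⟧ →+* K⟦X⟧ := (PowerSeries.expand (R := K) N hN : K⟦X⟧ →+* K⟦X⟧)
  have hψ0 : PowerSeries.constantCoeff ψ = 0 := by
    have hcc : (PowerSeries.constantCoeff (R := K)).comp e = PowerSeries.constantCoeff :=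
      RingHom.ext fun a ↦ PowerSeries.constantCoeff_expand N hN a
    have hmap : W.map PowerSeries.constantCoeff = Polynomial.X ^ W.natDegree := by
      ext i
      rw [Polynomial.coeff_map, Polynomial.coeff_X_pow]
      rcases lt_trichotomy i W.natDegree with h | h | h
      · rw [if_neg h.ne, ← PowerSeries.mem_maximalIdeal_iff_constantCoeff]
        exact hWd.mem h
      · rw [if_pos h, h, hWd.monic.coeff_natDegree, map_one]
      · rw [if_neg h.ne', Polynomial.coeff_eq_zero_of_natDegree_lt h, map_zero]
    have h0 := congrArg (PowerSeries.constantCoeff (R := K)) hψ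
    rw [Polynomial.hom_eval₂, hcc, ← Polynomial.eval_map, hmap, Polynomial.eval_pow,
      Polynomial.eval_X, map_zero] at h0
    exact eq_zero_of_pow_eq_zero h0
  have hs : HasSubst ![ψ, (PowerSeries.X ^ N : K⟦X⟧)] :=
    hasSubst_of_constantCoeff_zero fun s ↦ by
      fin_cases s
      · exact hψ0
      · change PowerSeries.constantCoeff (PowerSeries.X ^ N) = 0
        simp [hN]
  have hinj : Function.Injective e := by
    intro a b hab
    ext n
    rw [← PowerSeries.coeff_expand_mul N hN a, ← PowerSeries.coeff_expand_mul N hN b]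
    exact congrArg _ hab
  obtain ⟨M, hM⟩ := Polynomial.exists_eval₂_eq_zero_iff_dvd e hinj ⟨W, hWd.monic, hψ⟩
  set S : K⟦X⟧⟦X⟧ →+* K⟦X⟧ := (substAlgHom (R := K) hs : MvPowerSeries (Fin 2) K →+* K⟦X⟧).comp
    ((finTwoEquivPowerSeries (R := K)).symm : K⟦X⟧⟦X⟧ →+* MvPowerSeries (Fin 2) K) with hS
  have hSapply : ∀ g, S (finTwoEquivPowerSeries g) =
      subst ![ψ, (PowerSeries.X ^ N : K⟦X⟧)] g := by
    intro g
    simp [hS]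
  have hScoe : ∀ p : K⟦X⟧[X], S p = 0 ↔ M ∣ p := by
    intro p
    rw [← hM, ← subst_finTwoEquivPowerSeries_symm_coe (f := e) hs
      (fun a ↦ PowerSeries.expand_apply N hN a) p, ← hSapply, RingEquiv.apply_symm_apply]
  obtain ⟨B, hB⟩ := (hM W).mp hψ
  have hSM : S M = 0 := (hScoe M).mpr dvd_rfl
  have hfM : Associated (finTwoEquivPowerSeries f) (M : K⟦X⟧⟦X⟧) := by
    refine (hfirr.dvd_iff.mp ⟨B * u, ?_⟩).resolve_left fun hu ↦ ?_
    · rw [hW.eq_mul, hB, Polynomial.coe_mul, mul_assoc]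
    · exact not_isUnit_zero (hSM ▸ hu.map S)
  refine ⟨N, hN, ψ, hψ0, fun g ↦ ?_⟩
  rw [← hSapply, ← map_dvd_iff (finTwoEquivPowerSeries (R := K)), hfM.dvd_iff_dvd_left]
  constructor
  · intro hg
    have hdiv := (hWd.isWeierstrassDivisorAt'.isWeierstrassDivisionAt_div_mod
      (finTwoEquivPowerSeries g)).eq_mul_add
    have hMW : (M : K⟦X⟧⟦X⟧) ∣ W := ⟨B, by rw [hB, Polynomial.coe_mul]⟩
    rw [hdiv, map_add, map_mul, (hScoe W).mpr ⟨B, hB⟩, zero_mul, zero_add, hScoe] at hg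
    rw [hdiv]
    exact dvd_add (hMW.mul_right _)
      (map_dvd (Polynomial.coeToPowerSeries.ringHom (R := K⟦X⟧)) hg)
  · rintro ⟨h, hh⟩
    rw [hh, map_mul, hSM, zero_mul]

end MvPowerSeries

theorem substPS_eq_subst {φ₁ φ₂ : ℂ⟦X⟧} (h₁ : PowerSeries.constantCoeff φ₁ = 0)
    (h₂ : PowerSeries.constantCoeff φ₂ = 0) (g : MvPowerSeries (Fin 2) ℂ) :
    substPS φ₁ φ₂ g = MvPowerSeries.subst ![φ₁, φ₂] g := by
  have hs : MvPowerSeries.HasSubst ![φ₁, φ₂] :=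
    MvPowerSeries.hasSubst_of_constantCoeff_zero fun s ↦ by
      fin_cases s
      exacts [h₁, h₂]
  have hzero : ∀ {d i j : ℕ}, d < i + j → PowerSeries.coeff d (φ₁ ^ i * φ₂ ^ j) = 0 := by
    intro d i j hd
    have hdvd : (PowerSeries.X : ℂ⟦X⟧) ^ (i + j) ∣ φ₁ ^ i * φ₂ ^ j := by
      rw [pow_add]
      exact mul_dvd_mul (pow_dvd_pow_of_dvd (PowerSeries.X_dvd_iff.mpr h₁) _)
        (pow_dvd_pow_of_dvd (PowerSeries.X_dvd_iff.mpr h₂) _)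
    exact PowerSeries.X_pow_dvd_iff.mp hdvd d hd
  have hsingle : ∀ e : Fin 2 →₀ ℕ, Finsupp.single 0 (e 0) + Finsupp.single 1 (e 1) = e := by
    intro e
    ext s
    fin_cases s <;> simp
  ext d
  rw [substPS, PowerSeries.coeff_mk, PowerSeries.coeff, MvPowerSeries.coeff_subst hs]
  have hprod : ∀ e : Fin 2 →₀ ℕ,
      (e.prod fun s k ↦ (![φ₁, φ₂] : Fin 2 → ℂ⟦X⟧) s ^ k) = φ₁ ^ e 0 * φ₂ ^ e 1 := by
    intro e
    rw [Finsupp.prod_fintype _ _ (by simp), Fin.prod_univ_two]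
    rfl
  rw [finsum_eq_sum_of_support_subset (s := (Finset.range (d + 1) ×ˢ Finset.range (d + 1)).image
    fun p : ℕ × ℕ ↦ (Finsupp.single 0 p.1 + Finsupp.single 1 p.2 : Fin 2 →₀ ℕ))]
  · rw [Finset.sum_image]
    · refine Finset.sum_congr rfl fun p _ ↦ ?_
      rw [hprod, smul_eq_mul]
      simp [PowerSeries.coeff]
    · rintro ⟨a, b⟩ _ ⟨a', b'⟩ _ h
      have h0 := DFunLike.congr_fun h 0
      have h1 := DFunLike.congr_fun h 1
      simp only [Finsupp.add_apply, Finsupp.single_apply] at h0 h1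
      simpa using And.intro h0 h1
  · intro e he
    simp only [Finset.coe_image, Set.mem_image, Finset.mem_coe, Finset.mem_product,
      Finset.mem_range]
    refine ⟨(e 0, e 1), ?_, hsingle e⟩
    by_contra hlt
    refine he ?_
    dsimp only
    rw [hprod]
    have := hzero (d := d) (i := e 0) (j := e 1) (by simp only at hlt; omega)
    rw [PowerSeries.coeff] at this
    rw [this, smul_zero]

theorem substPS_X_zero_eq_zero_iff (g : MvPowerSeries (Fin 2) ℂ) :
    substPS PowerSeries.X 0 g = 0 ↔ MvPowerSeries.X 1 ∣ g := by
  have hcoeff : ∀ d, PowerSeries.coeff d (substPS PowerSeries.X 0 g) =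
      MvPowerSeries.coeff (Finsupp.single 0 d) g := by
    intro d
    rw [substPS, PowerSeries.coeff_mk, Finset.sum_eq_single (d, 0)]
    · simp
    · rintro ⟨i, j⟩ _ hne
      rcases eq_or_ne j 0 with rfl | hj
      · have : d ≠ i := fun h ↦ hne (by rw [h])
        simp [PowerSeries.coeff_X_pow, this]
      · simp [hj]
    · simp
  rw [MvPowerSeries.X_dvd_iff, PowerSeries.ext_iff]
  simp only [hcoeff, map_zero]
  refine ⟨fun h m hm ↦ ?_, fun h d ↦ h _ (by simp)⟩
  convert h (m 0)
  ext s
  fin_cases s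
  · simp
  · simpa using hm

/-- Let `f ∈ ℂ[[x,y]]` be an irreducible formal power series with zero
constant term.  Then there exist `φ₁, φ₂ ∈ ℂ[[τ]]` with zero constant term, not both zero,
such that `f(φ₁(τ), φ₂(τ)) = 0` and, moreover, the kernel of the substitution homomorphism
`g ↦ g(φ₁, φ₂)` is exactly the principal ideal `(f)` generated by `f` (existence of a
parametrization/uniformization of the irreducible curve germ `{f = 0}`). -/
theorem poincare_stmt4 (f : MvPowerSeries (Fin 2) ℂ)
    (hf : Irreducible f)
    (hf0 : MvPowerSeries.constantCoeff f = 0) :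
    ∃ φ₁ φ₂ : PowerSeries ℂ,
      PowerSeries.constantCoeff φ₁ = 0 ∧
      PowerSeries.constantCoeff φ₂ = 0 ∧
      ¬(φ₁ = 0 ∧ φ₂ = 0) ∧
      substPS φ₁ φ₂ f = 0 ∧
      {g : MvPowerSeries (Fin 2) ℂ | substPS φ₁ φ₂ g = 0} =
        ↑(Ideal.span {f}) := by
  have key : ∀ φ₁ φ₂ : PowerSeries ℂ, PowerSeries.constantCoeff φ₁ = 0 →
      PowerSeries.constantCoeff φ₂ = 0 → ¬(φ₁ = 0 ∧ φ₂ = 0) →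
      (∀ g, substPS φ₁ φ₂ g = 0 ↔ f ∣ g) → ∃ φ₁ φ₂ : PowerSeries ℂ,
      PowerSeries.constantCoeff φ₁ = 0 ∧ PowerSeries.constantCoeff φ₂ = 0 ∧
      ¬(φ₁ = 0 ∧ φ₂ = 0) ∧ substPS φ₁ φ₂ f = 0 ∧
      {g : MvPowerSeries (Fin 2) ℂ | substPS φ₁ φ₂ g = 0} = ↑(Ideal.span {f}) :=
    fun φ₁ φ₂ h₁ h₂ hne h ↦ ⟨φ₁, φ₂, h₁, h₂, hne, (h f).mpr dvd_rfl, by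
      ext g
      rw [Set.mem_ofPred_eq, h, SetLike.mem_coe, Ideal.mem_span_singleton]⟩
  by_cases hres : (MvPowerSeries.finTwoEquivPowerSeries f).map
      (IsLocalRing.residue ℂ⟦X⟧) = 0
  · have hfX := MvPowerSeries.associated_X_one_of_map_residue_eq_zero hf hres
    refine key PowerSeries.X 0 (by simp) (by simp) (fun h ↦ PowerSeries.X_ne_zero h.1) fun g ↦ ?_
    rw [substPS_X_zero_eq_zero_iff, hfX.dvd_iff_dvd_left]
  · obtain ⟨N, hN, ψ, hψ, h⟩ := MvPowerSeries.exists_subst_eq_zero_iff_dvd hf hres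
    have hXN : PowerSeries.constantCoeff ((PowerSeries.X : ℂ⟦X⟧) ^ N) = 0 := by simp [hN]
    refine key ψ (PowerSeries.X ^ N) hψ hXN
      (fun h0 ↦ pow_ne_zero _ PowerSeries.X_ne_zero h0.2) fun g ↦ ?_
    rw [substPS_eq_subst hψ hXN, h]
end

section
/- Let v₁, …, v_s be valuations on ℂ[[x,y]] with values in linearly ordered abelian groups G₁, …, G_s, each taking nonnegative values (together with +∞) and each centred at the origin, i.e. {g : v_i(g) > 0} = m for each i. For γ = (γ₁, …, γ_s) ∈ G₁ × ⋯ × G_s let J(γ) = {g : v_i(g) ≥ γ_i for all i} and J⁺(γ) = {g : v_i(g) > γ_i for all i}. Then for every γ the quotient J(γ)/J⁺(γ) is a finite-dimensional ℂ-vector space; consequently, for every subset I ⊆ {1,…,s}, the space J^{+I}(γ)/J⁺(γ) is finite-dimensional, where J^{+I}(γ) = {g ∈ J(γ) : v_i(g) > γ_i for i ∈ I}. -/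
open MvPowerSeries in
/-- A bivariate power series with zero constant coefficient lies in the ideal `(x, y)`. -/
theorem mem_span_X_of_constantCoeff_eq_zero {R : Type*} [CommRing R]
    {f : MvPowerSeries (Fin 2) R} (hf : constantCoeff f = 0) :
    f ∈ Ideal.span {(X 0 : MvPowerSeries (Fin 2) R), X 1} := by
  classical
  let a : MvPowerSeries (Fin 2) R := fun d => if d 0 = 0 then 0 else coeff d f
  have ha : ∀ d, coeff d a = if d 0 = 0 then 0 else coeff d f := fun _ => rfl
  have hX0 : (X 0 : MvPowerSeries (Fin 2) R) ∣ a :=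
    X_dvd_iff.2 fun d hd => by simp [ha, hd]
  have hX1 : (X 1 : MvPowerSeries (Fin 2) R) ∣ f - a := by
    refine X_dvd_iff.2 fun d hd => ?_
    by_cases h0 : d 0 = 0
    · have hd0 : d = 0 := by
        ext i
        fin_cases i <;> simp [h0, hd]
      rw [map_sub, ha, if_pos h0, sub_zero, hd0, coeff_zero_eq_constantCoeff_apply, hf]
    · simp [ha, h0]
  rw [← add_sub_cancel a f]
  exact add_mem (Ideal.mem_of_dvd _ hX0 (Ideal.subset_span (by simp)))
    (Ideal.mem_of_dvd _ hX1 (Ideal.subset_span (by simp)))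

open MvPowerSeries in
/-- Every ideal `K` of `k[[x, y]]` is spanned over `k`, modulo `(x, y) * K`, by finitely many
of its elements. -/
theorem exists_finset_span_modulo_span_X_mul {k : Type*} [Field k]
    (K : Ideal (MvPowerSeries (Fin 2) k)) :
    ∃ B : Finset (MvPowerSeries (Fin 2) k), (B : Set (MvPowerSeries (Fin 2) k)) ⊆ K ∧
      ∀ g ∈ K, ∃ p ∈ Submodule.span k (B : Set (MvPowerSeries (Fin 2) k)),
        g - p ∈ Ideal.span {(X 0 : MvPowerSeries (Fin 2) k), X 1} * K := by
  obtain ⟨B, hB⟩ := K.fg_of_isNoetherianRing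
  have hBK : (B : Set (MvPowerSeries (Fin 2) k)) ⊆ K := hB ▸ Submodule.subset_span
  refine ⟨B, hBK, fun g hg => ?_⟩
  rw [← hB] at hg
  obtain ⟨r, -, rfl⟩ := Submodule.mem_span_finset.1 hg
  refine ⟨∑ b ∈ B, constantCoeff (r b) • b,
    sum_mem fun b hb => Submodule.smul_mem _ _ (Submodule.subset_span hb), ?_⟩
  rw [← Finset.sum_sub_distrib]
  refine sum_mem fun b hb => ?_
  rw [smul_eq_mul, smul_eq_C_mul, ← sub_mul]
  exact Ideal.mul_mem_mul (mem_span_X_of_constantCoeff_eq_zero (by simp)) (hBK hb)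

/-- Let `v₁, …, v_s` be valuations on `ℂ[[x,y]]` with values in linearly
ordered abelian groups `G₁, …, G_s`, each taking nonnegative values (together with `+∞`)
and each centred at the origin, i.e. `{g : v_i g > 0} = m` for each `i`.  For
`γ = (γ₁, …, γ_s)` let `J(γ) = {g : v_i g ≥ γ_i for all i}` and
`J⁺(γ) = {g : v_i g > γ_i for all i}`.  Then for every `γ` the quotient `J(γ)/J⁺(γ)` is a
finite-dimensional `ℂ`-vector space (expressed here as: a finite subset of `J(γ)` spans
`J(γ)` modulo `J⁺(γ)`); consequently for every subset `I ⊆ {1, …, s}` the space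
`J^{+I}(γ)/J⁺(γ)` is finite-dimensional, where
`J^{+I}(γ) = {g ∈ J(γ) : v_i g > γ_i for i ∈ I}`. -/
theorem poincare_stmt6 {s : ℕ} (G : Fin s → Type*)
    [∀ i, AddCommGroup (G i)] [∀ i, LinearOrder (G i)] [∀ i, IsOrderedAddMonoid (G i)]
    (v : (i : Fin s) → MvPowerSeries (Fin 2) ℂ → WithTop (G i))
    (hmul : ∀ i g₁ g₂, v i (g₁ * g₂) = v i g₁ + v i g₂)
    (hadd : ∀ i g₁ g₂, min (v i g₁) (v i g₂) ≤ v i (g₁ + g₂))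
    (hC : ∀ i (c : ℂ), c ≠ 0 → v i (MvPowerSeries.C (σ := Fin 2) (R := ℂ) c) = 0)
    (hzero : ∀ i, v i 0 = ⊤)
    (hnonneg : ∀ i g, 0 ≤ v i g)
    (hcentred : ∀ i, {g : MvPowerSeries (Fin 2) ℂ | 0 < v i g} =
      ↑(Ideal.span {(MvPowerSeries.X 0 : MvPowerSeries (Fin 2) ℂ), MvPowerSeries.X 1})) :
    ∀ γ : (i : Fin s) → G i,
      (∃ B : Finset (MvPowerSeries (Fin 2) ℂ),
        (↑B ⊆ {g : MvPowerSeries (Fin 2) ℂ | ∀ i, (γ i : WithTop (G i)) ≤ v i g}) ∧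
        ∀ g : MvPowerSeries (Fin 2) ℂ, (∀ i, (γ i : WithTop (G i)) ≤ v i g) →
          ∃ p ∈ Submodule.span ℂ (B : Set (MvPowerSeries (Fin 2) ℂ)),
            ∀ i, (γ i : WithTop (G i)) < v i (g - p)) ∧
      ∀ I : Set (Fin s),
        ∃ B : Finset (MvPowerSeries (Fin 2) ℂ),
          (↑B ⊆ {g : MvPowerSeries (Fin 2) ℂ |
            (∀ i, (γ i : WithTop (G i)) ≤ v i g) ∧ ∀ i ∈ I, (γ i : WithTop (G i)) < v i g}) ∧
          ∀ g : MvPowerSeries (Fin 2) ℂ,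
            ((∀ i, (γ i : WithTop (G i)) ≤ v i g) ∧ ∀ i ∈ I, (γ i : WithTop (G i)) < v i g) →
            ∃ p ∈ Submodule.span ℂ (B : Set (MvPowerSeries (Fin 2) ℂ)),
              ∀ i, (γ i : WithTop (G i)) < v i (g - p) := by
  intro γ
  have key : ∀ I : Set (Fin s),
      ∃ B : Finset (MvPowerSeries (Fin 2) ℂ),
        (↑B ⊆ {g : MvPowerSeries (Fin 2) ℂ |
          (∀ i, (γ i : WithTop (G i)) ≤ v i g) ∧ ∀ i ∈ I, (γ i : WithTop (G i)) < v i g}) ∧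
        ∀ g : MvPowerSeries (Fin 2) ℂ,
          ((∀ i, (γ i : WithTop (G i)) ≤ v i g) ∧ ∀ i ∈ I, (γ i : WithTop (G i)) < v i g) →
          ∃ p ∈ Submodule.span ℂ (B : Set (MvPowerSeries (Fin 2) ℂ)),
            ∀ i, (γ i : WithTop (G i)) < v i (g - p) := by
    intro I
    have hle_mul : ∀ i a g, v i g ≤ v i (a * g) := fun i a g => by
      rw [hmul]
      exact le_add_of_nonneg_left (hnonneg i a)
    let K : Ideal (MvPowerSeries (Fin 2) ℂ) :=
      { carrier := {g | (∀ i, (γ i : WithTop (G i)) ≤ v i g) ∧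
          ∀ i ∈ I, (γ i : WithTop (G i)) < v i g}
        zero_mem' := by simp [hzero]
        add_mem' := fun ha hb =>
          ⟨fun i => (le_min (ha.1 i) (hb.1 i)).trans (hadd i _ _),
            fun i hi => (lt_min (ha.2 i hi) (hb.2 i hi)).trans_le (hadd i _ _)⟩
        smul_mem' := fun a g hg =>
          ⟨fun i => (hg.1 i).trans (hle_mul i a g),
            fun i hi => (hg.2 i hi).trans_le (hle_mul i a g)⟩ }
    obtain ⟨B, hBK, hB⟩ := exists_finset_span_modulo_span_X_mul K
    refine ⟨B, hBK, fun g hg => ?_⟩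
    obtain ⟨p, hp, hgp⟩ := hB g hg
    refine ⟨p, hp, fun i => ?_⟩
    refine Submodule.mul_induction_on hgp (fun a ha b hb => ?_)
      fun a b ha hb => (lt_min ha hb).trans_le (hadd i a b)
    have hpos : 0 < v i a := (hcentred i).ge ha
    rw [hmul]
    calc (γ i : WithTop (G i)) = 0 + γ i := (zero_add _).symm
      _ < v i a + γ i := WithTop.add_lt_add_right WithTop.coe_ne_top hpos
      _ ≤ v i a + v i b := by gcongr; exact hb.1 i
  refine ⟨?_, key⟩
  simpa using key ∅
end

section
/- Every formal power series F ∈ ℤ[[t₁, …, t_s]] with constant term equal to 1 has a unique representation as an infinite product ∏_{a ∈ ℤ^s≥0, a ≠ 0} (1 − t^a)^{k_a} with integer exponents k_a ∈ ℤ (here t^a = t₁^{a₁}⋯t_s^{a_s}). Precisely: there is a unique family (k_a)_{a ∈ ℤ^s≥0 \ {0}} of integers such that for every N ≥ 1, F is congruent to the finite product ∏_{0 < a₁+⋯+a_s ≤ N} (1 − t^a)^{k_a} modulo the (N+1)-st power of the ideal (t₁, …, t_s). -/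
open scoped BigOperators

namespace MvPowerSeries

open Finsupp

section Order

variable {σ R : Type*} [CommRing R]

theorem natCast_le_order_iff {f : MvPowerSeries σ R} {n : ℕ} :
    (n : ℕ∞) ≤ f.order ↔ ∀ d, degree d < n → coeff d f = 0 :=
  ⟨fun h _ hd => coeff_of_lt_order ((Nat.cast_lt.2 hd).trans_le h), nat_le_order⟩

/-- A power series of order at least `n + 1` in finitely many variables is a combination
of the variables whose coefficients have order at least `n`. -/
theorem exists_eq_sum_X_mul [Fintype σ] {f : MvPowerSeries σ R} {n : ℕ}
    (hf : ((n + 1 : ℕ) : ℕ∞) ≤ f.order) :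
    ∃ g : σ → MvPowerSeries σ R, (∀ i, (n : ℕ∞) ≤ (g i).order) ∧ f = ∑ i, X i * g i := by
  classical
  rw [natCast_le_order_iff] at hf
  rcases isEmpty_or_nonempty σ with hσ | hσ
  · refine ⟨0, isEmptyElim, ?_⟩
    ext d
    simp [Subsingleton.elim d 0, hf 0]
  have hpick : ∀ d : σ →₀ ℕ, d ≠ 0 → ∃ i, d i ≠ 0 := fun d hd => Finsupp.ne_iff.1 hd
  choose! pick hpick using hpick
  obtain ⟨g, hg⟩ : ∃ g : σ → MvPowerSeries σ R, ∀ i d, coeff d (g i) =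
      if pick (d + single i 1) = i then coeff (d + single i 1) f else 0 :=
    ⟨fun i d => if pick (d + single i 1) = i then coeff (d + single i 1) f else 0,
      fun _ _ => rfl⟩
  refine ⟨g, fun i => natCast_le_order_iff.2 fun d hd => ?_, ?_⟩
  · rw [hg, hf _ (by simpa using hd), ite_self]
  · ext d
    have hterm : ∀ i, coeff d (X i * g i) = if pick d = i ∧ d ≠ 0 then coeff d f else 0 := by
      intro i
      rw [X, coeff_monomial_mul, one_mul]
      by_cases h : single i 1 ≤ d
      · have hd : d ≠ 0 := by
          rintro rfl
          simpa using h i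
        rw [if_pos h, hg]
        simp [tsub_add_cancel_of_le h, hd]
      · rw [if_neg h, if_neg]
        rintro ⟨rfl, hd⟩
        exact h (by simpa [Nat.one_le_iff_ne_zero] using hpick d hd)
    rw [map_sum, Finset.sum_congr rfl fun i _ => hterm i]
    by_cases hd : d = 0
    · simp [hd, hf 0]
    · simp [hd]

/-- The powers of the ideal generated by the variables form the filtration by order. -/
theorem mem_span_range_X_pow_iff [Finite σ] {f : MvPowerSeries σ R} {n : ℕ} :
    f ∈ Ideal.span (Set.range (X : σ → MvPowerSeries σ R)) ^ n ↔ (n : ℕ∞) ≤ f.order := by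
  have := Fintype.ofFinite σ
  constructor
  · intro hf
    induction n generalizing f with
    | zero => simp
    | succ n ih =>
      rw [pow_succ] at hf
      refine Submodule.mul_induction_on hf (fun a ha b hb => ?_)
        fun a b ha hb => (le_min ha hb).trans min_order_le_add
      have hb0 : b.constantCoeff = 0 := by
        have : Ideal.span (Set.range (X : σ → MvPowerSeries σ R)) ≤
            RingHom.ker (constantCoeff (σ := σ) (R := R)) :=
          Ideal.span_le.2 (by rintro _ ⟨i, rfl⟩; simp)
        exact this hb
      rw [Nat.cast_succ]
      exact (add_le_add (ih ha) (one_le_order_iff_constCoeff_eq_zero.2 hb0)).trans le_order_mul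
  · intro hf
    induction n generalizing f with
    | zero => simp
    | succ n ih =>
      obtain ⟨g, hg, rfl⟩ := exists_eq_sum_X_mul hf
      refine Ideal.sum_mem _ fun i _ => ?_
      rw [pow_succ']
      exact Ideal.mul_mem_mul (Ideal.subset_span ⟨i, rfl⟩) (ih (hg i))

variable (σ R) in
/-- The units congruent to `1` modulo series of order at least `n`. -/
def oneUnits (n : ℕ) : Subgroup (MvPowerSeries σ R)ˣ where
  carrier := {x | (n : ℕ∞) ≤ ((x : MvPowerSeries σ R) - 1).order}
  one_mem' := by simp
  mul_mem' {x y} hx hy := by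
    have : ((x * y : (MvPowerSeries σ R)ˣ) : MvPowerSeries σ R) - 1 =
        (x - 1) * y + (y - 1) := by push_cast; ring
    rw [Set.mem_ofPred_eq, this]
    exact (le_min ((le_add_right hx).trans le_order_mul) hy).trans min_order_le_add
  inv_mem' {x} hx := by
    have : ((x⁻¹ : (MvPowerSeries σ R)ˣ) : MvPowerSeries σ R) - 1 =
        (x - 1) * -((x⁻¹ : (MvPowerSeries σ R)ˣ) : MvPowerSeries σ R) := by
      rw [sub_mul, mul_neg, Units.mul_inv]; ring
    rw [Set.mem_ofPred_eq, this]
    exact (le_add_right hx).trans le_order_mul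

theorem mem_oneUnits {n : ℕ} {x : (MvPowerSeries σ R)ˣ} :
    x ∈ oneUnits σ R n ↔ (n : ℕ∞) ≤ ((x : MvPowerSeries σ R) - 1).order := Iff.rfl

theorem mul_inv_mem_oneUnits_iff {n : ℕ} {x y : (MvPowerSeries σ R)ˣ} :
    x * y⁻¹ ∈ oneUnits σ R n ↔ (n : ℕ∞) ≤ ((x : MvPowerSeries σ R) - y).order := by
  rw [mem_oneUnits]
  constructor <;> intro h
  · have : (x : MvPowerSeries σ R) - y = ((x * y⁻¹ : (MvPowerSeries σ R)ˣ) - 1) * y := by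
      rw [sub_mul, ← Units.val_mul]; simp
    rw [this]
    exact (le_add_right h).trans le_order_mul
  · have : ((x * y⁻¹ : (MvPowerSeries σ R)ˣ) : MvPowerSeries σ R) - 1 =
        (x - y) * (y⁻¹ : (MvPowerSeries σ R)ˣ) := by
      rw [sub_mul, Units.mul_inv, Units.val_mul]
    rw [this]
    exact (le_add_right h).trans le_order_mul

/-- A coefficient of degree `n ≥ 1` is additive on the units congruent to `1` modulo
series of order at least `n`. -/
def oneUnitsCoeff (d : σ →₀ ℕ) (hd : d ≠ 0) :
    oneUnits σ R (degree d) →* Multiplicative R where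
  toFun x := Multiplicative.ofAdd (coeff d ((x : (MvPowerSeries σ R)ˣ) : MvPowerSeries σ R))
  map_one' := by
    classical
    simp [coeff_one, hd]
  map_mul' x y := by
    classical
    obtain ⟨x, hx⟩ := x
    obtain ⟨y, hy⟩ := y
    rw [mem_oneUnits] at hx hy
    have hprod : coeff d (((x : MvPowerSeries σ R) - 1) * ((y : MvPowerSeries σ R) - 1)) = 0 := by
      refine coeff_of_lt_order (lt_of_lt_of_le ?_ ((add_le_add hx hy).trans le_order_mul))
      have : degree d ≠ 0 := by rwa [Ne, degree_eq_zero_iff]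
      exact_mod_cast (by lia : degree d < degree d + degree d)
    rw [← ofAdd_add]
    congr 1
    have : ((x : MvPowerSeries σ R) - 1) * ((y : MvPowerSeries σ R) - 1) = x * y - x - y + 1 := by ring
    rw [this] at hprod
    simp only [map_add, map_sub, coeff_one, hd, if_false] at hprod
    simp only [Subgroup.coe_mul, Units.val_mul]
    linear_combination hprod

theorem coeff_mul_of_mem_oneUnits {d : σ →₀ ℕ} (hd : d ≠ 0) {x y : (MvPowerSeries σ R)ˣ}
    (hx : x ∈ oneUnits σ R (degree d)) (hy : y ∈ oneUnits σ R (degree d)) :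
    coeff d ((x * y : (MvPowerSeries σ R)ˣ) : MvPowerSeries σ R) =
      coeff d (x : MvPowerSeries σ R) + coeff d (y : MvPowerSeries σ R) :=
  congrArg Multiplicative.toAdd (map_mul (oneUnitsCoeff (R := R) d hd) ⟨x, hx⟩ ⟨y, hy⟩)

theorem coeff_inv_of_mem_oneUnits {d : σ →₀ ℕ} (hd : d ≠ 0) {x : (MvPowerSeries σ R)ˣ}
    (hx : x ∈ oneUnits σ R (degree d)) :
    coeff d ((x⁻¹ : (MvPowerSeries σ R)ˣ) : MvPowerSeries σ R) =
      -coeff d (x : MvPowerSeries σ R) :=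
  congrArg Multiplicative.toAdd (map_inv (oneUnitsCoeff (R := R) d hd) ⟨x, hx⟩)

theorem coeff_zpow_of_mem_oneUnits {d : σ →₀ ℕ} (hd : d ≠ 0) {x : (MvPowerSeries σ R)ˣ}
    (hx : x ∈ oneUnits σ R (degree d)) (k : ℤ) :
    coeff d ((x ^ k : (MvPowerSeries σ R)ˣ) : MvPowerSeries σ R) =
      k • coeff d (x : MvPowerSeries σ R) :=
  congrArg Multiplicative.toAdd (map_zpow (oneUnitsCoeff (R := R) d hd) ⟨x, hx⟩ k)

theorem coeff_prod_of_mem_oneUnits {ι : Type*} {d : σ →₀ ℕ} (hd : d ≠ 0) (s : Finset ι)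
    {x : ι → (MvPowerSeries σ R)ˣ} (hx : ∀ i ∈ s, x i ∈ oneUnits σ R (degree d)) :
    coeff d ((∏ i ∈ s, x i : (MvPowerSeries σ R)ˣ) : MvPowerSeries σ R) =
      ∑ i ∈ s, coeff d (x i : MvPowerSeries σ R) := by
  classical
  induction s using Finset.induction_on with
  | empty => simp [coeff_one, hd]
  | insert i s hi ih =>
    rw [Finset.forall_mem_insert] at hx
    rw [Finset.prod_insert hi, Finset.sum_insert hi,
      coeff_mul_of_mem_oneUnits hd hx.1 (prod_mem hx.2), ih hx.2]

theorem mem_oneUnits_succ_iff {n : ℕ} {x : (MvPowerSeries σ R)ˣ} (hx : x ∈ oneUnits σ R n)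
    (hn : n ≠ 0) :
    x ∈ oneUnits σ R (n + 1) ↔ ∀ d, degree d = n → coeff d (x : MvPowerSeries σ R) = 0 := by
  classical
  have hsub : ∀ d, d ≠ 0 →
      coeff d ((x : MvPowerSeries σ R) - 1) = coeff d (x : MvPowerSeries σ R) := by
    intro d hd
    simp [coeff_one, hd]
  have hne : ∀ d : σ →₀ ℕ, degree d = n → d ≠ 0 := by
    rintro d hd rfl
    exact hn (by simpa using hd.symm)
  rw [mem_oneUnits, natCast_le_order_iff] at *
  refine ⟨fun h d hd => ?_, fun h d hd => ?_⟩
  · rw [← hsub d (hne d hd), h d (by lia)]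
  · rcases (Nat.lt_succ_iff_lt_or_eq.1 hd) with hd | hd
    · exact hx d hd
    · rw [hsub d (hne d hd), h d hd]

theorem oneSub_monomial_mem_oneUnits {a : σ →₀ ℕ} {x : (MvPowerSeries σ R)ˣ}
    (hx : (x : MvPowerSeries σ R) = 1 - monomial a 1) :
    x ∈ oneUnits σ R (degree a) := by
  classical
  rw [mem_oneUnits, natCast_le_order_iff, hx]
  intro d hd
  have : d ≠ a := by rintro rfl; exact lt_irrefl _ hd
  simp [coeff_monomial, this]

end Order

section Product

variable {σ R : Type*} [CommRing R]
  {u : {a : σ →₀ ℕ // a ≠ 0} → (MvPowerSeries σ R)ˣ}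

/-- The product of the factors `u a ^ k a` with `a` of degree at most `N`. -/
noncomputable def partialProd (u : {a : σ →₀ ℕ // a ≠ 0} → (MvPowerSeries σ R)ˣ)
    (k : {a : σ →₀ ℕ // a ≠ 0} → ℤ) (N : ℕ) : (MvPowerSeries σ R)ˣ :=
  ∏ᶠ (a : {a : σ →₀ ℕ // a ≠ 0}) (_ : degree (a : σ →₀ ℕ) ≤ N), u a ^ k a

theorem partialProd_zero (k : {a : σ →₀ ℕ // a ≠ 0} → ℤ) : partialProd u k 0 = 1 := by
  refine finprod_mem_of_eqOn_one (f := fun a => u a ^ k a)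
    (s := {a : {a : σ →₀ ℕ // a ≠ 0} | degree (a : σ →₀ ℕ) ≤ 0}) fun a h => ?_
  exact absurd ((degree_eq_zero_iff _).1 (Nat.le_zero.1 h)) a.2

variable [Finite σ]

theorem finite_subtype_degree_le (p : (σ →₀ ℕ) → Prop) (N : ℕ) :
    {a : {a : σ →₀ ℕ // p a} | degree (a : σ →₀ ℕ) ≤ N}.Finite :=
  (finite_of_degree_le N).preimage Subtype.val_injective.injOn

theorem finite_subtype_degree_eq (p : (σ →₀ ℕ) → Prop) (N : ℕ) :
    {a : {a : σ →₀ ℕ // p a} | degree (a : σ →₀ ℕ) = N}.Finite :=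
  (finite_subtype_degree_le p N).subset fun _ h => le_of_eq h

/-- The product of the factors `u a ^ k a` with `a` of degree `N`. -/
noncomputable def degreeProd (u : {a : σ →₀ ℕ // a ≠ 0} → (MvPowerSeries σ R)ˣ)
    (k : {a : σ →₀ ℕ // a ≠ 0} → ℤ) (N : ℕ) : (MvPowerSeries σ R)ˣ :=
  ∏ a ∈ (finite_subtype_degree_eq (· ≠ 0) N).toFinset, u a ^ k a

theorem partialProd_succ (k : {a : σ →₀ ℕ // a ≠ 0} → ℤ) (N : ℕ) :
    partialProd u k (N + 1) = partialProd u k N * degreeProd u k (N + 1) := by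
  have hunion : {a : {a : σ →₀ ℕ // a ≠ 0} | degree (a : σ →₀ ℕ) ≤ N + 1} =
      {a : {a : σ →₀ ℕ // a ≠ 0} | degree (a : σ →₀ ℕ) ≤ N} ∪
        {a : {a : σ →₀ ℕ // a ≠ 0} | degree (a : σ →₀ ℕ) = N + 1} := by
    ext a
    exact Nat.le_succ_iff
  have hdisj : Disjoint {a : {a : σ →₀ ℕ // a ≠ 0} | degree (a : σ →₀ ℕ) ≤ N}
      {a : {a : σ →₀ ℕ // a ≠ 0} | degree (a : σ →₀ ℕ) = N + 1} := by
    rw [Set.disjoint_left]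
    intro a h h'
    simp only [Set.mem_ofPred_eq] at h h'
    lia
  have h := finprod_mem_union (f := fun a => u a ^ k a) hdisj
    (finite_subtype_degree_le (· ≠ 0) N) (finite_subtype_degree_eq (· ≠ 0) (N + 1))
  rw [← hunion, finprod_mem_eq_finite_toFinset_prod _
    (finite_subtype_degree_eq (· ≠ 0) (N + 1))] at h
  exact h

theorem zpow_mem_oneUnits
    (hu : ∀ a, (u a : MvPowerSeries σ R) = 1 - monomial (a : σ →₀ ℕ) 1)
    (k : {a : σ →₀ ℕ // a ≠ 0} → ℤ) {N : ℕ} {a : {a : σ →₀ ℕ // a ≠ 0}}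
    (ha : a ∈ (finite_subtype_degree_eq (σ := σ) (· ≠ 0) N).toFinset) :
    u a ^ k a ∈ oneUnits σ R N := by
  have ha' : degree (a : σ →₀ ℕ) = N := by simpa using ha
  exact zpow_mem (ha' ▸ oneSub_monomial_mem_oneUnits (hu a)) _

theorem degreeProd_mem_oneUnits
    (hu : ∀ a, (u a : MvPowerSeries σ R) = 1 - monomial (a : σ →₀ ℕ) 1)
    (k : {a : σ →₀ ℕ // a ≠ 0} → ℤ) (N : ℕ) :
    degreeProd u k N ∈ oneUnits σ R N :=
  prod_mem fun _ ha => zpow_mem_oneUnits hu k ha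

theorem coeff_degreeProd
    (hu : ∀ a, (u a : MvPowerSeries σ R) = 1 - monomial (a : σ →₀ ℕ) 1)
    (k : {a : σ →₀ ℕ // a ≠ 0} → ℤ)
    (a : {a : σ →₀ ℕ // a ≠ 0}) :
    coeff (a : σ →₀ ℕ) (degreeProd u k (degree (a : σ →₀ ℕ)) : MvPowerSeries σ R) =
      -(k a : R) := by
  classical
  rw [degreeProd, coeff_prod_of_mem_oneUnits a.2 _ fun _ hb => zpow_mem_oneUnits hu k hb,
    Finset.sum_eq_single a]
  · rw [coeff_zpow_of_mem_oneUnits a.2 (oneSub_monomial_mem_oneUnits (hu a)), hu]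
    simp [coeff_one, a.2]
  · intro b hb hba
    have hb' : degree (b : σ →₀ ℕ) = degree (a : σ →₀ ℕ) := by simpa using hb
    have hab : (a : σ →₀ ℕ) ≠ b := fun h => hba (Subtype.ext h.symm)
    rw [coeff_zpow_of_mem_oneUnits a.2 (hb' ▸ oneSub_monomial_mem_oneUnits (hu b)), hu]
    simp [coeff_one, a.2, coeff_monomial, hab]
  · simp

/-- Passing from degree `N` to degree `N + 1` determines the exponents of degree `N + 1`. -/
theorem mul_inv_partialProd_succ_mem_iff
    (hu : ∀ a, (u a : MvPowerSeries σ R) = 1 - monomial (a : σ →₀ ℕ) 1)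
    (k : {a : σ →₀ ℕ // a ≠ 0} → ℤ)
    {f : (MvPowerSeries σ R)ˣ} {N : ℕ}
    (hf : f * (partialProd u k N)⁻¹ ∈ oneUnits σ R (N + 1)) :
    f * (partialProd u k (N + 1))⁻¹ ∈ oneUnits σ R (N + 2) ↔
      ∀ a : {a : σ →₀ ℕ // a ≠ 0}, degree (a : σ →₀ ℕ) = N + 1 →
        (k a : R) = -coeff (a : σ →₀ ℕ)
          ((f * (partialProd u k N)⁻¹ : (MvPowerSeries σ R)ˣ) : MvPowerSeries σ R) := by
  have hD := degreeProd_mem_oneUnits hu k (N + 1)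
  have heq : f * (partialProd u k (N + 1))⁻¹ =
      (f * (partialProd u k N)⁻¹) * (degreeProd u k (N + 1))⁻¹ := by
    rw [partialProd_succ, mul_inv, mul_assoc]
  have hcoeff : ∀ a : {a : σ →₀ ℕ // a ≠ 0}, degree (a : σ →₀ ℕ) = N + 1 →
      coeff (a : σ →₀ ℕ)
        ((f * (partialProd u k (N + 1))⁻¹ : (MvPowerSeries σ R)ˣ) : MvPowerSeries σ R) =
      coeff (a : σ →₀ ℕ)
        ((f * (partialProd u k N)⁻¹ : (MvPowerSeries σ R)ˣ) : MvPowerSeries σ R) + k a := by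
    intro a ha
    rw [← ha] at hf hD
    rw [heq, coeff_mul_of_mem_oneUnits a.2 hf (inv_mem (ha ▸ hD)),
      ← ha, coeff_inv_of_mem_oneUnits a.2 hD, coeff_degreeProd hu, neg_neg]
  rw [mem_oneUnits_succ_iff (heq ▸ mul_mem hf (inv_mem hD)) N.succ_ne_zero]
  refine ⟨fun h a ha => ?_, fun h d hd => ?_⟩
  · have := h a ha
    rw [hcoeff a ha] at this
    exact eq_neg_of_add_eq_zero_right this
  · have hd0 : d ≠ 0 := by
      rintro rfl
      simp at hd
    have := hcoeff ⟨d, hd0⟩ hd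
    rw [h ⟨d, hd0⟩ hd, add_neg_cancel] at this
    exact this

end Product

section Integer

variable {σ : Type*} [Finite σ]

/-- The partial products obtained by successively correcting the lowest-degree error
in approximating `f`. -/
noncomputable def approxProd (u : {a : σ →₀ ℕ // a ≠ 0} → (MvPowerSeries σ ℤ)ˣ)
    (f : (MvPowerSeries σ ℤ)ˣ) : ℕ → (MvPowerSeries σ ℤ)ˣ
  | 0 => 1
  | N + 1 => approxProd u f N * degreeProd u (fun a => -coeff (a : σ →₀ ℕ)
      ((f * (approxProd u f N)⁻¹ : (MvPowerSeries σ ℤ)ˣ) : MvPowerSeries σ ℤ)) (N + 1)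

/-- The exponents produced by successive correction. -/
noncomputable def approxExponent (u : {a : σ →₀ ℕ // a ≠ 0} → (MvPowerSeries σ ℤ)ˣ)
    (f : (MvPowerSeries σ ℤ)ˣ) (a : {a : σ →₀ ℕ // a ≠ 0}) : ℤ :=
  -coeff (a : σ →₀ ℕ) ((f * (approxProd u f (degree (a : σ →₀ ℕ) - 1))⁻¹ :
    (MvPowerSeries σ ℤ)ˣ) : MvPowerSeries σ ℤ)

theorem partialProd_approxExponent (u : {a : σ →₀ ℕ // a ≠ 0} → (MvPowerSeries σ ℤ)ˣ)
    (f : (MvPowerSeries σ ℤ)ˣ) (N : ℕ) :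
    partialProd u (approxExponent u f) N = approxProd u f N := by
  induction N with
  | zero => exact partialProd_zero _
  | succ N ih =>
    rw [partialProd_succ, ih, approxProd]
    congr 1
    refine Finset.prod_congr rfl fun a ha => ?_
    have ha' : degree (a : σ →₀ ℕ) = N + 1 := by simpa using ha
    simp [approxExponent, ha']

theorem existsUnique_forall_mul_inv_partialProd_mem
    {u : {a : σ →₀ ℕ // a ≠ 0} → (MvPowerSeries σ ℤ)ˣ}
    (hu : ∀ a, (u a : MvPowerSeries σ ℤ) = 1 - monomial (a : σ →₀ ℕ) 1)
    {f : (MvPowerSeries σ ℤ)ˣ} (hf : f ∈ oneUnits σ ℤ 1) :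
    ∃! k : {a : σ →₀ ℕ // a ≠ 0} → ℤ,
      ∀ N : ℕ, 1 ≤ N → f * (partialProd u k N)⁻¹ ∈ oneUnits σ ℤ (N + 1) := by
  have hzero : ∀ k, f * (partialProd u k 0)⁻¹ ∈ oneUnits σ ℤ (0 + 1) := fun k => by
    simpa [partialProd_zero] using hf
  refine ⟨approxExponent u f, fun N hN => ?_, fun k hk => ?_⟩
  · clear hN
    induction N with
    | zero => exact hzero _
    | succ N ih =>
      refine (mul_inv_partialProd_succ_mem_iff hu _ ih).2 fun a ha => ?_
      rw [partialProd_approxExponent, approxExponent, ha, Nat.add_sub_cancel, Int.cast_id]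
  · have hk' : ∀ N, f * (partialProd u k N)⁻¹ ∈ oneUnits σ ℤ (N + 1) := by
      rintro (_ | N)
      · exact hzero k
      · exact hk _ N.succ_pos
    have hrec : ∀ N, ∀ a : {a : σ →₀ ℕ // a ≠ 0}, degree (a : σ →₀ ℕ) = N + 1 →
        k a = -coeff (a : σ →₀ ℕ)
          ((f * (partialProd u k N)⁻¹ : (MvPowerSeries σ ℤ)ˣ) : MvPowerSeries σ ℤ) :=
      fun N => (mul_inv_partialProd_succ_mem_iff hu k (hk' N)).1 (hk' (N + 1))
    have hprod : ∀ N, partialProd u k N = approxProd u f N := by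
      intro N
      induction N with
      | zero => exact partialProd_zero _
      | succ N ih =>
        rw [partialProd_succ, approxProd, ← ih]
        congr 1
        refine Finset.prod_congr rfl fun a ha => ?_
        exact congrArg (u a ^ ·) (hrec N a (by simpa using ha))
    funext a
    have ha : degree (a : σ →₀ ℕ) ≠ 0 := by simpa [degree_eq_zero_iff] using a.2
    rw [approxExponent, ← hprod]
    exact hrec _ a (by lia)

end Integer

end MvPowerSeries

/-- Every formal power series `F ∈ ℤ[[t₁, …, t_s]]` with constant term `1` has
a unique representation as an infinite product `∏_{a ≠ 0} (1 - t^a)^{k_a}` with integer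
exponents `k_a ∈ ℤ`: there is a unique family `(k_a)` of integers such that for every
`N ≥ 1`, `F` is congruent to the finite product `∏_{0 < |a| ≤ N} (1 - t^a)^{k_a}` modulo
the `(N+1)`-st power of the ideal `(t₁, …, t_s)`.  (Here `u a` is the series `1 - t^a`
regarded as a unit of `ℤ[[t₁, …, t_s]]`, so that negative powers make sense.) -/
theorem poincare_stmt7 {s : ℕ} (F : MvPowerSeries (Fin s) ℤ)
    (hF : MvPowerSeries.constantCoeff (σ := Fin s) (R := ℤ) F = 1)
    (u : {a : Fin s →₀ ℕ // a ≠ 0} → (MvPowerSeries (Fin s) ℤ)ˣ)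
    (hu : ∀ a : {a : Fin s →₀ ℕ // a ≠ 0}, (u a : MvPowerSeries (Fin s) ℤ) =
      1 - MvPowerSeries.monomial (R := ℤ) (a : Fin s →₀ ℕ) 1) :
    ∃! k : {a : Fin s →₀ ℕ // a ≠ 0} → ℤ,
      ∀ N : ℕ, 1 ≤ N →
        F - ↑(∏ᶠ (a : {a : Fin s →₀ ℕ // a ≠ 0})
            (_ : (a : Fin s →₀ ℕ).sum (fun _ n => n) ≤ N), u a ^ k a)
          ∈ (Ideal.span (Set.range (MvPowerSeries.X : Fin s → MvPowerSeries (Fin s) ℤ)))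
              ^ (N + 1) := by
  obtain ⟨f, rfl⟩ : IsUnit F := MvPowerSeries.isUnit_iff_constantCoeff.2 (by simp [hF])
  have hf : f ∈ MvPowerSeries.oneUnits (Fin s) ℤ 1 := by
    rw [MvPowerSeries.mem_oneUnits, Nat.cast_one,
      MvPowerSeries.one_le_order_iff_constCoeff_eq_zero]
    simp [hF]
  have h := MvPowerSeries.existsUnique_forall_mul_inv_partialProd_mem hu hf
  simp only [MvPowerSeries.mul_inv_mem_oneUnits_iff,
    ← MvPowerSeries.mem_span_range_X_pow_iff] at h
  exact h
end
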